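/- ζ_E(3) = (2π²/7)·(G/π + Σ_{k=1}^∞ λ(2k)/((2k+1)(2k+2)·2^{2k})), where ζ_E(3) = Σ_{n=1}^∞ (-1)^{n+1}/n³, G is Catalan's constant, and λ(s) = Σ_{m=0}^∞ 1/(2m+1)^s. -/

import Mathlib

open Real

noncomputable def dirichletLambda (s : ℕ) : ℝ := ∑' m : ℕ, 1 / (2 * (m : ℝ) + 1) ^ s

open Filter Topology MeasureTheory

/-!
The identity comes from evaluating `∫ θ in 0..a, θ * (a - θ) * tan θ` at `a = π / 4` in two ways.
Integrating the power series of `θ * tan θ`, whose coefficients are given by the values `λ(2k)`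
through the Mittag-Leffler expansion of the tangent, yields the series of lambda values. Integrating
the formal Fourier series `2 * ∑ (-1) ^ n * sin (2 * (n + 1) * θ)` of `tan θ` yields `ζ_E(3)` and
`G`. That series diverges, but the error of its partial sums integrates to an oscillatory integral
that vanishes in the limit by the Riemann-Lebesgue lemma.
-/

-- The poles need no exception: `cot` and `tan` take the value `0` there.
lemma cot_sub_two_mul_cot_two_mul (z : ℂ) :
    Complex.cot z - 2 * Complex.cot (2 * z) = Complex.tan z := by
  rw [Complex.cot_eq_cos_div_sin, Complex.cot_eq_cos_div_sin, Complex.tan_eq_sin_div_cos,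
    Complex.sin_two_mul, Complex.cos_two_mul']
  rcases eq_or_ne (Complex.sin z) 0 with hs | hs
  · simp [hs]
  rcases eq_or_ne (Complex.cos z) 0 with hc | hc
  · simp [hc]
  field_simp
  ring

lemma half_mem_integerComplement {z : ℂ} (hz : z ∈ Complex.integerComplement) :
    z / 2 ∈ Complex.integerComplement := by
  rintro ⟨n, hn⟩
  refine hz ⟨2 * n, ?_⟩
  push_cast
  rw [hn, mul_div_cancel₀ z two_ne_zero]

lemma hasSum_cotTerm {z : ℂ} (hz : z ∈ Complex.integerComplement) :
    HasSum (cotTerm z) (π * Complex.cot (π * z) - 1 / z) :=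
  cot_series_rep' hz ▸ (summable_cotTerm hz).hasSum

lemma cotTerm_two_mul_add_one (z : ℂ) (n : ℕ) :
    cotTerm z (2 * n + 1) = 1 / 2 * cotTerm (z / 2) n := by
  have hsub : z - ((2 * n + 1 : ℕ) + 1) = 2 * (z / 2 - (n + 1)) := by push_cast; ring
  have hadd : z + ((2 * n + 1 : ℕ) + 1) = 2 * (z / 2 + (n + 1)) := by push_cast; ring
  rw [cotTerm, cotTerm, hsub, hadd, mul_add (1 / 2 : ℂ),
    one_div_mul_one_div, one_div_mul_one_div]

lemma hasSum_cotTerm_two_mul {z : ℂ} (hz : z ∈ Complex.integerComplement) :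
    HasSum (fun n ↦ cotTerm z (2 * n)) (-(π / 2) * Complex.tan (π * z / 2)) := by
  have hodd : HasSum (fun n ↦ cotTerm z (2 * n + 1))
      (1 / 2 * (π * Complex.cot (π * (z / 2)) - 1 / (z / 2))) := by
    simpa only [cotTerm_two_mul_add_one] using
      (hasSum_cotTerm (half_mem_integerComplement hz)).mul_left (1 / 2)
  have heven : Summable fun n ↦ cotTerm z (2 * n) :=
    (summable_cotTerm hz).comp_injective (mul_right_injective₀ two_ne_zero)
  have hsplit := (heven.hasSum.even_add_odd hodd).unique (hasSum_cotTerm hz)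
  convert! heven.hasSum using 1
  rw [eq_sub_of_add_eq hsplit, ← cot_sub_two_mul_cot_two_mul,
    mul_div_cancel₀ ((π : ℂ) * z) two_ne_zero, mul_div_assoc, one_div_div]
  ring

lemma ofReal_mem_integerComplement {x : ℝ} (hx : |x| < 1) (h0 : x ≠ 0) :
    (x : ℂ) ∈ Complex.integerComplement := by
  rintro ⟨n, hn⟩
  obtain rfl : (n : ℝ) = x := by exact_mod_cast hn
  have hn1 : |n| < 1 := by exact_mod_cast hx
  exact h0 (by simp [Int.abs_lt_one_iff.mp hn1])

lemma hasSum_tan_partialFractions {x : ℝ} (hx : |x| < 1) :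
    HasSum (fun m : ℕ ↦ x ^ 2 / ((2 * (m : ℝ) + 1) ^ 2 - x ^ 2))
      (π * x / 4 * tan (π * x / 2)) := by
  rcases eq_or_ne x 0 with rfl | h0
  · simp [hasSum_zero]
  have hz := ofReal_mem_integerComplement hx h0
  rw [← Complex.hasSum_ofReal]
  convert! (hasSum_cotTerm_two_mul hz).mul_left (-(x / 2 : ℂ)) using 1
  · funext m
    rw [cotTerm_identity hz, ← sq_sub_sq, ← neg_sub (x ^ 2)]
    push_cast
    rw [div_neg]
    ring
  · push_cast
    ring

lemma hasSum_div_pow_two_mul_succ {x y : ℝ} (h : |x| < |y|) :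
    HasSum (fun k : ℕ ↦ (x / y) ^ (2 * (k + 1))) (x ^ 2 / (y ^ 2 - x ^ 2)) := by
  have hsq : x ^ 2 < y ^ 2 := sq_lt_sq.mpr h
  have hy : y ≠ 0 := abs_pos.mp ((abs_nonneg x).trans_lt h)
  have hlt : (x / y) ^ 2 < 1 := by rwa [div_pow, div_lt_one (by positivity)]
  have hne : y ^ 2 - x ^ 2 ≠ 0 := (sub_pos.mpr hsq).ne'
  convert! (hasSum_geometric_of_lt_one (sq_nonneg _) hlt).mul_left ((x / y) ^ 2) using 1
  · funext k
    ring
  · field_simp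

lemma hasSum_dirichletLambda_mul_pow {x : ℝ} (hx : |x| < 1) :
    HasSum (fun k : ℕ ↦ dirichletLambda (2 * (k + 1)) * x ^ (2 * (k + 1)))
      (π * x / 4 * tan (π * x / 2)) := by
  have hrow (m : ℕ) : HasSum (fun k : ℕ ↦ (x / (2 * (m : ℝ) + 1)) ^ (2 * (k + 1)))
      (x ^ 2 / ((2 * (m : ℝ) + 1) ^ 2 - x ^ 2)) := by
    refine hasSum_div_pow_two_mul_succ (hx.trans_le ?_)
    rw [abs_of_pos (by positivity)]
    linarith [Nat.cast_nonneg (α := ℝ) m]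
  have htan := hasSum_tan_partialFractions hx
  have hsummable : Summable (Function.uncurry fun m k : ℕ ↦
      (x / (2 * (m : ℝ) + 1)) ^ (2 * (k + 1))) := by
    refine (summable_prod_of_nonneg fun p ↦ (even_two_mul _).pow_nonneg _).mpr
      ⟨fun m ↦ (hrow m).summable, ?_⟩
    simpa only [Function.uncurry_apply_pair, (hrow _).tsum_eq] using htan.summable
  have hcol (k : ℕ) : ∑' m : ℕ, (x / (2 * (m : ℝ) + 1)) ^ (2 * (k + 1))
      = dirichletLambda (2 * (k + 1)) * x ^ (2 * (k + 1)) := by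
    rw [dirichletLambda, ← tsum_mul_right]
    refine tsum_congr fun m ↦ ?_
    rw [div_pow, div_eq_mul_one_div, mul_comm]
  have hswap := hsummable.tsum_comm
  simp only [(hrow _).tsum_eq, htan.tsum_eq, hcol] at hswap
  have hcols := hsummable.prod_symm.prod
  simp only [Prod.swap_prod_mk, Function.uncurry_apply_pair, hcol] at hcols
  exact hswap ▸ hcols.hasSum

lemma dirichletLambda_nonneg (s : ℕ) : 0 ≤ dirichletLambda s :=
  tsum_nonneg fun m ↦ by positivity

lemma integral_sub_mul_const_mul_pow (a c : ℝ) (n : ℕ) :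
    ∫ θ in (0 : ℝ)..a, (a - θ) * (c * θ) ^ n = a ^ 2 * (c * a) ^ n / ((n + 1) * (n + 2)) := by
  have hn : (n : ℝ) + 1 ≠ 0 := by positivity
  have hn' : (n : ℝ) + 2 ≠ 0 := by positivity
  have hexpand (θ : ℝ) : (a - θ) * (c * θ) ^ n = c ^ n * (a * θ ^ n - θ ^ (n + 1)) := by ring
  simp only [hexpand]
  rw [intervalIntegral.integral_const_mul, intervalIntegral.integral_sub
      (Continuous.intervalIntegrable (by fun_prop) _ _)
      (Continuous.intervalIntegrable (by fun_prop) _ _),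
    intervalIntegral.integral_const_mul, integral_pow, integral_pow]
  push_cast
  rw [add_assoc (n : ℝ) 1 1, one_add_one_eq_two, zero_pow n.succ_ne_zero,
    zero_pow (n + 1).succ_ne_zero]
  field_simp
  ring

lemma abs_le_abs_of_mem_uIcc_zero {a θ : ℝ} (hθ : θ ∈ Set.uIcc 0 a) : |θ| ≤ |a| := by
  simpa only [sub_zero] using Set.abs_sub_left_of_mem_uIcc hθ

lemma hasSum_mul_tan {θ : ℝ} (hθ : |θ| < π / 2) :
    HasSum (fun k : ℕ ↦ 2 * dirichletLambda (2 * (k + 1)) * (2 / π * θ) ^ (2 * (k + 1)))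
      (θ * tan θ) := by
  have hx : |2 / π * θ| < 1 := by
    rw [abs_mul, abs_of_pos (div_pos two_pos pi_pos), div_mul_eq_mul_div, div_lt_one pi_pos]
    linarith
  have harg : π * (2 / π * θ) = 2 * θ := by rw [← mul_assoc, mul_div_cancel₀ _ pi_ne_zero]
  convert! (hasSum_dirichletLambda_mul_pow hx).mul_left 2 using 1
  · simp only [mul_assoc]
  · rw [harg, mul_div_cancel_left₀ θ two_ne_zero]
    ring

lemma hasSum_integral_mul_sub_mul_tan {a : ℝ} (ha : |a| < π / 2) :
    HasSum (fun k : ℕ ↦ 2 * a ^ 2 * (dirichletLambda (2 * (k + 1)) * (2 / π * a) ^ (2 * (k + 1))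
        / ((2 * ((k : ℝ) + 1) + 1) * (2 * ((k : ℝ) + 1) + 2))))
      (∫ θ in (0 : ℝ)..a, θ * (a - θ) * tan θ) := by
  have hterm (k : ℕ) : 2 * a ^ 2 * (dirichletLambda (2 * (k + 1)) * (2 / π * a) ^ (2 * (k + 1))
        / ((2 * ((k : ℝ) + 1) + 1) * (2 * ((k : ℝ) + 1) + 2)))
      = ∫ θ in (0 : ℝ)..a,
          2 * dirichletLambda (2 * (k + 1)) * ((a - θ) * (2 / π * θ) ^ (2 * (k + 1))) := by
    rw [intervalIntegral.integral_const_mul, integral_sub_mul_const_mul_pow]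
    push_cast
    ring
  simp only [hterm]
  refine intervalIntegral.hasSum_integral_of_dominated_convergence
    (fun k _ ↦ |a| * (2 * dirichletLambda (2 * (k + 1)) * (2 / π * a) ^ (2 * (k + 1))))
    (fun k ↦ Continuous.aestronglyMeasurable (by fun_prop))
    (fun k ↦ Eventually.of_forall fun θ hθ ↦ ?bound)
    (Eventually.of_forall fun _ _ ↦ (hasSum_mul_tan ha).summable.mul_left |a|)
    intervalIntegrable_const (Eventually.of_forall fun θ hθ ↦ ?limit)
  case bound =>
    have hθa : |θ| ≤ |a| := abs_le_abs_of_mem_uIcc_zero (Set.uIoc_subset_uIcc hθ)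
    have haθ : |a - θ| ≤ |a| := by
      simpa only [sub_zero] using Set.abs_sub_right_of_mem_uIcc (Set.uIoc_subset_uIcc hθ)
    have hl := dirichletLambda_nonneg (2 * (k + 1))
    have heven : Even (2 * (k + 1)) := even_two_mul _
    rw [norm_eq_abs, abs_mul, abs_mul (a - θ), abs_of_nonneg (mul_nonneg zero_le_two hl),
      mul_left_comm, abs_pow, abs_mul, ← heven.pow_abs (2 / π * a), abs_mul (2 / π) a]
    gcongr
  case limit =>
    have hθa : |θ| < π / 2 :=
      (abs_le_abs_of_mem_uIcc_zero (Set.uIoc_subset_uIcc hθ)).trans_lt ha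
    convert! (hasSum_mul_tan hθa).mul_left (a - θ) using 1
    · funext k
      ring
    · ring

lemma sum_range_alternating_sin {θ : ℝ} (hθ : cos θ ≠ 0) (N : ℕ) :
    ∑ n ∈ Finset.range N, (-1 : ℝ) ^ n * (2 * sin (2 * ((n : ℝ) + 1) * θ))
      = tan θ - (-1) ^ N * (sin ((2 * (N : ℝ) + 1) * θ) / cos θ) := by
  induction N with
  | zero => simp [tan_eq_sin_div_cos]
  | succ N ih =>
    have hprev : sin ((2 * (N : ℝ) + 1) * θ)
        = sin (2 * ((N : ℝ) + 1) * θ) * cos θ - cos (2 * ((N : ℝ) + 1) * θ) * sin θ := by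
      rw [← sin_sub]
      ring_nf
    have hnext : sin ((2 * ((N + 1 : ℕ) : ℝ) + 1) * θ)
        = sin (2 * ((N : ℝ) + 1) * θ) * cos θ + cos (2 * ((N : ℝ) + 1) * θ) * sin θ := by
      rw [← sin_add]
      push_cast
      ring_nf
    rw [Finset.sum_range_succ, ih, hprev, hnext, pow_succ]
    field_simp
    ring

lemma tendsto_integral_mul_sin_atTop {f : ℝ → ℝ} (hf : Integrable f) :
    Tendsto (fun ω ↦ ∫ t, f t * sin (ω * t)) atTop (𝓝 0) := by
  have hω : Tendsto (fun ω ↦ ω / (2 * π)) atTop (cocompact ℝ) :=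
    (tendsto_id.atTop_div_const two_pi_pos).mono_right atTop_le_cocompact
  have him := (Complex.continuous_im.tendsto 0).comp
    ((Real.tendsto_integral_exp_smul_cocompact fun t ↦ (f t : ℂ)).comp hω)
  rw [← neg_zero (G := ℝ)]
  refine him.neg.congr fun ω ↦ ?_
  have hint : Integrable fun t ↦ fourierChar (-(t * (ω / (2 * π)))) • (f t : ℂ) := by
    simpa [mul_comm] using
      (Real.fourierIntegral_convergent_iff (ω / (2 * π))).mpr hf.ofReal
  simp only [Function.comp_apply]
  rw [← Complex.imCLM_apply, ← Complex.imCLM.integral_comp_comm hint, ← integral_neg]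
  congr with t
  have harg : 2 * π * -(t * (ω / (2 * π))) = -(ω * t) := by field_simp
  rw [Complex.imCLM_apply, Circle.smul_def, fourierChar_apply, harg, smul_eq_mul,
    Complex.im_mul_ofReal, Complex.exp_ofReal_mul_I_im, sin_neg]
  ring

lemma tendsto_intervalIntegral_mul_sin_atTop {f : ℝ → ℝ} {a b : ℝ}
    (hf : IntervalIntegrable f volume a b) :
    Tendsto (fun ω ↦ ∫ t in a..b, f t * sin (ω * t)) atTop (𝓝 0) := by
  have hset {s : Set ℝ} (hs : MeasurableSet s) (hfs : IntegrableOn f s) :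
      Tendsto (fun ω ↦ ∫ t in s, f t * sin (ω * t)) atTop (𝓝 0) := by
    refine (tendsto_integral_mul_sin_atTop (hfs.integrable_indicator hs)).congr fun ω ↦ ?_
    rw [← integral_indicator hs]
    simp only [Set.indicator_mul_left]
  simpa only [intervalIntegral, sub_zero] using
    (hset measurableSet_Ioc hf.1).sub (hset measurableSet_Ioc hf.2)

lemma intervalIntegrable_div_cos {g : ℝ → ℝ} {a b : ℝ} (hg : IntervalIntegrable g volume a b)
    (hcos : ∀ θ ∈ Set.uIcc a b, cos θ ≠ 0) :
    IntervalIntegrable (fun θ ↦ g θ / cos θ) volume a b := by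
  simpa only [div_eq_mul_inv] using hg.mul_continuousOn (continuousOn_cos.fun_inv₀ hcos)

lemma sum_range_integral_mul_sin {g : ℝ → ℝ} {a b : ℝ} (hg : IntervalIntegrable g volume a b)
    (hcos : ∀ θ ∈ Set.uIcc a b, cos θ ≠ 0) (N : ℕ) :
    ∑ n ∈ Finset.range N, (-1 : ℝ) ^ n * (2 * ∫ θ in a..b, g θ * sin (2 * ((n : ℝ) + 1) * θ))
      = (∫ θ in a..b, g θ * tan θ)
        - (-1) ^ N * ∫ θ in a..b, g θ / cos θ * sin ((2 * (N : ℝ) + 1) * θ) := by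
  have htan : IntervalIntegrable (fun θ ↦ g θ * tan θ) volume a b :=
    hg.mul_continuousOn fun θ hθ ↦ (continuousAt_tan.mpr (hcos θ hθ)).continuousWithinAt
  simp only [← intervalIntegral.integral_const_mul]
  rw [← intervalIntegral.integral_sub htan
      (((intervalIntegrable_div_cos hg hcos).mul_continuousOn (by fun_prop)).const_mul _),
    ← intervalIntegral.integral_finsetSum fun n _ ↦
      ((hg.mul_continuousOn (by fun_prop)).const_mul _).const_mul _]
  refine intervalIntegral.integral_congr fun θ hθ ↦ ?_
  calc ∑ n ∈ Finset.range N, (-1 : ℝ) ^ n * (2 * (g θ * sin (2 * ((n : ℝ) + 1) * θ)))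
      = g θ * ∑ n ∈ Finset.range N, (-1 : ℝ) ^ n * (2 * sin (2 * ((n : ℝ) + 1) * θ)) := by
        rw [Finset.mul_sum]
        exact Finset.sum_congr rfl fun n _ ↦ by ring
    _ = g θ * tan θ - (-1) ^ N * (g θ / cos θ * sin ((2 * (N : ℝ) + 1) * θ)) := by
        rw [sum_range_alternating_sin (hcos θ hθ)]
        ring

lemma tendsto_sum_integral_mul_sin {g : ℝ → ℝ} {a b : ℝ} (hg : IntervalIntegrable g volume a b)
    (hcos : ∀ θ ∈ Set.uIcc a b, cos θ ≠ 0) :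
    Tendsto (fun N : ℕ ↦ ∑ n ∈ Finset.range N, (-1 : ℝ) ^ n *
        (2 * ∫ θ in a..b, g θ * sin (2 * ((n : ℝ) + 1) * θ))) atTop
      (𝓝 (∫ θ in a..b, g θ * tan θ)) := by
  have hfreq : Tendsto (fun N : ℕ ↦ 2 * (N : ℝ) + 1) atTop atTop :=
    tendsto_atTop_add_const_right _ _ (tendsto_natCast_atTop_atTop.const_mul_atTop two_pos)
  have hremainder : Tendsto (fun N : ℕ ↦ (-1 : ℝ) ^ N *
      ∫ θ in a..b, g θ / cos θ * sin ((2 * (N : ℝ) + 1) * θ)) atTop (𝓝 0) := by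
    refine squeeze_zero_norm (fun N ↦ ?_) (tendsto_zero_iff_norm_tendsto_zero.mp
      ((tendsto_intervalIntegral_mul_sin_atTop (intervalIntegrable_div_cos hg hcos)).comp hfreq))
    simp
  simpa only [sum_range_integral_mul_sin hg hcos, sub_zero] using
    hremainder.const_sub (∫ θ in a..b, g θ * tan θ)

lemma integral_mul_sub_mul_sin (a : ℝ) {c : ℝ} (hc : c ≠ 0) :
    ∫ θ in (0 : ℝ)..a, θ * (a - θ) * sin (c * θ)
      = (2 * (1 - cos (c * a)) - c * a * sin (c * a)) / c ^ 3 := by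
  have hderiv (θ : ℝ) : HasDerivAt
      (fun θ ↦ -(θ * (a - θ)) * cos (c * θ) / c + (a - 2 * θ) * sin (c * θ) / c ^ 2
        - 2 * cos (c * θ) / c ^ 3) (θ * (a - θ) * sin (c * θ)) θ := by
    have hmul : HasDerivAt (fun θ ↦ c * θ) c θ := by simpa using (hasDerivAt_id θ).const_mul c
    have hquad : HasDerivAt (fun θ ↦ -(θ * (a - θ))) (-(a - 2 * θ)) θ :=
      ((hasDerivAt_id' θ).mul ((hasDerivAt_id' θ).const_sub a)).neg.congr_deriv (by ring)
    have hlin : HasDerivAt (fun θ ↦ a - 2 * θ) (-2) θ := by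
      simpa using ((hasDerivAt_id θ).const_mul 2).const_sub a
    refine ((((hquad.mul hmul.cos).div_const c).add ((hlin.mul hmul.sin).div_const (c ^ 2))).sub
      ((hmul.cos.const_mul 2).div_const (c ^ 3))).congr_deriv ?_
    field_simp
    ring
  rw [intervalIntegral.integral_eq_sub_of_hasDerivAt (fun θ _ ↦ hderiv θ)
    (Continuous.intervalIntegrable (by fun_prop) _ _)]
  simp only [mul_zero, cos_zero, sin_zero]
  field_simp
  ring

/-- The alternating zeta value `ζ_E(s) = ∑ (-1) ^ (n + 1) / n ^ s` over `n ≥ 1`, with the index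
shifted to start at `0`. It is used at `s = 3`. -/
noncomputable def zetaE (s : ℕ) : ℝ := ∑' n : ℕ, (-1 : ℝ) ^ n / ((n : ℝ) + 1) ^ s

/-- The Dirichlet beta value `β(s)`. Catalan's constant is `G = β(2)`. -/
noncomputable def dirichletBeta (s : ℕ) : ℝ := ∑' n : ℕ, (-1 : ℝ) ^ n / (2 * (n : ℝ) + 1) ^ s

lemma summable_div_natCast_add_one_pow {u : ℕ → ℝ} {C : ℝ} (hu : ∀ n, |u n| ≤ C) {s : ℕ}
    (hs : 1 < s) : Summable fun n : ℕ ↦ u n / ((n : ℝ) + 1) ^ s := by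
  have hpow : Summable fun n : ℕ ↦ C * (1 / ((n + 1 : ℕ) : ℝ) ^ s) :=
    ((summable_nat_add_iff 1).mpr (summable_one_div_nat_pow.mpr hs)).mul_left C
  refine .of_norm_bounded hpow fun n ↦ ?_
  rw [norm_div, norm_pow, ← Nat.cast_succ, RCLike.norm_natCast, mul_one_div]
  gcongr
  exact hu n

lemma integral_mul_sub_mul_tan {a : ℝ} (ha : |a| < π / 2) :
    ∫ θ in (0 : ℝ)..a, θ * (a - θ) * tan θ
      = (zetaE 3 - ∑' n : ℕ, (-1) ^ n * cos (2 * ((n : ℝ) + 1) * a) / ((n : ℝ) + 1) ^ 3) / 2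
        - a / 2 * ∑' n : ℕ, (-1) ^ n * sin (2 * ((n : ℝ) + 1) * a) / ((n : ℝ) + 1) ^ 2 := by
  have hcos : ∀ θ ∈ Set.uIcc 0 a, cos θ ≠ 0 := fun θ hθ ↦ by
    have hθa : |θ| < π / 2 := (abs_le_abs_of_mem_uIcc_zero hθ).trans_lt ha
    exact (cos_pos_of_mem_Ioo (abs_lt.mp hθa)).ne'
  have hzeta : Summable fun n : ℕ ↦ (-1 : ℝ) ^ n / ((n : ℝ) + 1) ^ 3 :=
    summable_div_natCast_add_one_pow (C := 1) (fun n ↦ by simp) (by norm_num)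
  have hcosines : Summable fun n : ℕ ↦
      (-1) ^ n * cos (2 * ((n : ℝ) + 1) * a) / ((n : ℝ) + 1) ^ 3 :=
    summable_div_natCast_add_one_pow (C := 1)
      (fun n ↦ by simpa [abs_mul] using abs_cos_le_one _) (by norm_num)
  have hsines : Summable fun n : ℕ ↦
      (-1) ^ n * sin (2 * ((n : ℝ) + 1) * a) / ((n : ℝ) + 1) ^ 2 :=
    summable_div_natCast_add_one_pow (C := 1)
      (fun n ↦ by simpa [abs_mul] using abs_sin_le_one _) (by norm_num)
  have hsum := ((hzeta.hasSum.sub hcosines.hasSum).div_const 2).sub (hsines.hasSum.mul_left (a / 2))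
  refine tendsto_nhds_unique (tendsto_sum_integral_mul_sin
    (Continuous.intervalIntegrable (by fun_prop) _ _) hcos) (hsum.tendsto_sum_nat.congr fun N ↦ ?_)
  refine Finset.sum_congr rfl fun n _ ↦ ?_
  have hn : (n : ℝ) + 1 ≠ 0 := by positivity
  rw [integral_mul_sub_mul_sin a (mul_ne_zero two_ne_zero hn)]
  field_simp

lemma even_harmonic_mul_pi_div_four (k : ℕ) :
    2 * (((2 * k : ℕ) : ℝ) + 1) * (π / 4) = k * π + π / 2 := by
  push_cast
  ring

lemma odd_harmonic_mul_pi_div_four (k : ℕ) :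
    2 * (((2 * k + 1 : ℕ) : ℝ) + 1) * (π / 4) = (k + 1 : ℕ) * π := by
  push_cast
  ring

lemma tsum_alternating_cos_pi_div_four (s : ℕ) :
    ∑' n : ℕ, (-1) ^ n * cos (2 * ((n : ℝ) + 1) * (π / 4)) / ((n : ℝ) + 1) ^ s
      = zetaE s / 2 ^ s := by
  have hinj : Function.Injective fun k : ℕ ↦ 2 * k + 1 :=
    (add_left_injective 1).comp (mul_right_injective₀ two_ne_zero)
  rw [zetaE, ← tsum_div_const, ← hinj.tsum_eq]
  · refine tsum_congr fun k ↦ ?_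
    have hbase : ((2 * k + 1 : ℕ) : ℝ) + 1 = (k + 1) * 2 := by push_cast; ring
    have hsign : (-1 : ℝ) ^ (2 * k + 1) * (-1) ^ (k + 1) = (-1) ^ k := by
      rw [(odd_two_mul_add_one k).neg_one_pow, pow_succ]
      ring
    rw [odd_harmonic_mul_pi_div_four, cos_nat_mul_pi, hsign, hbase, mul_pow, div_div]
  · refine Function.support_subset_iff'.mpr fun n hn ↦ ?_
    obtain ⟨k, rfl | rfl⟩ := n.even_or_odd'
    · rw [even_harmonic_mul_pi_div_four, cos_add_pi_div_two, sin_nat_mul_pi, neg_zero, mul_zero,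
        zero_div]
    · exact absurd ⟨k, rfl⟩ hn

lemma tsum_alternating_sin_pi_div_four (s : ℕ) :
    ∑' n : ℕ, (-1) ^ n * sin (2 * ((n : ℝ) + 1) * (π / 4)) / ((n : ℝ) + 1) ^ s
      = dirichletBeta s := by
  rw [dirichletBeta, ← (mul_right_injective₀ (two_ne_zero (α := ℕ))).tsum_eq]
  · refine tsum_congr fun k ↦ ?_
    rw [even_harmonic_mul_pi_div_four, sin_add_pi_div_two, cos_nat_mul_pi,
      (even_two_mul k).neg_one_pow, one_mul, Nat.cast_mul, Nat.cast_two]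
  · refine Function.support_subset_iff'.mpr fun n hn ↦ ?_
    obtain ⟨k, rfl | rfl⟩ := n.even_or_odd'
    · exact absurd ⟨k, rfl⟩ hn
    · rw [odd_harmonic_mul_pi_div_four, sin_nat_mul_pi, mul_zero, zero_div]

lemma abs_pi_div_four_lt_pi_div_two : |π / 4| < π / 2 := by
  rw [abs_of_pos (div_pos pi_pos four_pos)]
  linarith [pi_pos]

lemma integral_mul_pi_div_four_sub_mul_tan :
    ∫ θ in (0 : ℝ)..(π / 4), θ * (π / 4 - θ) * tan θ
      = 7 / 16 * zetaE 3 - π / 8 * dirichletBeta 2 := by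
  rw [integral_mul_sub_mul_tan abs_pi_div_four_lt_pi_div_two, tsum_alternating_cos_pi_div_four,
    tsum_alternating_sin_pi_div_four]
  ring

lemma hasSum_dirichletLambda_even_div :
    HasSum (fun k : ℕ ↦ dirichletLambda (2 * (k + 1))
        / ((2 * ((k : ℝ) + 1) + 1) * (2 * ((k : ℝ) + 1) + 2) * 2 ^ (2 * (k + 1))))
      (8 / π ^ 2 * ∫ θ in (0 : ℝ)..(π / 4), θ * (π / 4 - θ) * tan θ) := by
  convert! (hasSum_integral_mul_sub_mul_tan abs_pi_div_four_lt_pi_div_two).mul_left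
    (8 / π ^ 2) using 1
  funext k
  have harg : 2 / π * (π / 4) = 1 / 2 := by field_simp; norm_num
  rw [harg, one_div_pow]
  field_simp
  ring

theorem zetaE_three_series :
    ∑' n : ℕ, (-1 : ℝ) ^ (n + 1 + 1) / ((n : ℝ) + 1) ^ 3
      = (2 * π ^ 2 / 7) * ((∑' n : ℕ, (-1 : ℝ) ^ n / (2 * (n : ℝ) + 1) ^ 2) / π
        + ∑' k : ℕ, dirichletLambda (2 * (k + 1))
            / ((2 * ((k : ℝ) + 1) + 1) * (2 * ((k : ℝ) + 1) + 2) * 2 ^ (2 * (k + 1)))) := by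
  have hzeta : ∑' n : ℕ, (-1 : ℝ) ^ (n + 1 + 1) / ((n : ℝ) + 1) ^ 3 = zetaE 3 :=
    tsum_congr fun n ↦ by rw [pow_succ, pow_succ, mul_neg_one, mul_neg_one, neg_neg]
  rw [hzeta, ← dirichletBeta, hasSum_dirichletLambda_even_div.tsum_eq,
    integral_mul_pi_div_four_sub_mul_tan]
  field_simp
  ring
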